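/- Assume Φ₀ > 0 and Φ₀⁻¹ ≤ φ ≤ Φ₀. Then the map u ↦ D(u)⁻¹ is globally Lipschitz: for all u, v ∈ ℝ^d, ‖D(u)⁻¹ − D(v)⁻¹‖ ≤ Φ₀³ d₀⁻² (α₁ + 3|α₂ − α₁|) |u − v|, where ‖·‖ denotes the operator norm of d×d matrices. -/

import Mathlib

/-!
Write `h(s) = d_p / (d_p s + d_r)`, so that `g(s) = h(s) s²` and
`D(u) = φ [(d₀ + α₁ g(|u|)) I + (α₂ - α₁) h(|u|) u ⊗ u]`, a formula without division by `|u|`.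

* `D(u)` is coercive with constant `φ d₀` (by Cauchy–Schwarz), so `‖D(u)⁻¹‖ ≤ Φ₀ / d₀`.
* `g` is 1-Lipschitz on `[0, ∞)`, and the splitting
  `h(|u|) u ⊗ u - h(|v|) v ⊗ v
    = h(|u|) u ⊗ (u - v) + h(|v|) (u - v) ⊗ v + (h(|u|) - h(|v|)) u ⊗ v`
  has three terms, each of norm at most `|u - v|`, because `h(s) s ≤ 1` and
  `|h(s) - h(t)| s t ≤ |s - t|`.  Hence `‖D(u) - D(v)‖ ≤ Φ₀ (α₁ + 3 |α₂ - α₁|) |u - v|`.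

The resolvent identity `D(u)⁻¹ - D(v)⁻¹ = D(u)⁻¹ (D(v) - D(u)) D(v)⁻¹` combines the two bounds.
-/

open scoped RealInnerProductSpace

/-- `g(s) = d_p s² / (d_p s + d_r)`, the factor `F(Pe)|u|` with `Pe = d_p s`. -/
noncomputable def gfun (dp dr s : ℝ) : ℝ := dp * s ^ 2 / (dp * s + dr)

/-- The rank-one matrix `u ⊗ u`, acting as `ξ ↦ ⟨u, ξ⟩ u`. -/
noncomputable def outerProd {d : ℕ} (u : EuclideanSpace ℝ (Fin d)) :
    EuclideanSpace ℝ (Fin d) →L[ℝ] EuclideanSpace ℝ (Fin d) :=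
  (innerSL ℝ u).smulRight u

/-- The diffusion–dispersion matrix
`D(u) = φ[d₀ I + F(Pe)|u| (α₁ I + (α₂ - α₁) (u⊗u)/|u|²)]`;
for `u = 0` the formula gives `φ d₀ I` since `g(0) = 0` (and `outerProd 0 = 0`). -/
noncomputable def Dmat {d : ℕ} (d0 α1 α2 dp dr φ : ℝ) (u : EuclideanSpace ℝ (Fin d)) :
    EuclideanSpace ℝ (Fin d) →L[ℝ] EuclideanSpace ℝ (Fin d) :=
  φ • (d0 • ContinuousLinearMap.id ℝ (EuclideanSpace ℝ (Fin d)) +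
    gfun dp dr ‖u‖ • (α1 • ContinuousLinearMap.id ℝ (EuclideanSpace ℝ (Fin d)) +
      ((α2 - α1) / ‖u‖ ^ 2) • outerProd u))

/-- `h(s) = d_p / (d_p s + d_r)`, that is `g(s) / s²` with the singularity at `0` removed. -/
noncomputable def hfun (dp dr s : ℝ) : ℝ := dp / (dp * s + dr)

lemma gfun_eq (dp dr s : ℝ) : gfun dp dr s = hfun dp dr s * s ^ 2 := by
  unfold gfun hfun; ring

lemma hfun_pos {dp dr s : ℝ} (hdp : 0 < dp) (hdr : 0 < dr) (hs : 0 ≤ s) :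
    0 < hfun dp dr s := by
  unfold hfun; positivity

lemma hfun_mul_le_one {dp dr s : ℝ} (hdp : 0 < dp) (hdr : 0 < dr) (hs : 0 ≤ s) :
    hfun dp dr s * s ≤ 1 := by
  have : 0 < dp * s + dr := by positivity
  unfold hfun
  rw [div_mul_eq_mul_div, div_le_one this]
  linarith

lemma hfun_sub {dp dr s t : ℝ} (hdp : 0 < dp) (hdr : 0 < dr) (hs : 0 ≤ s) (ht : 0 ≤ t) :
    hfun dp dr s - hfun dp dr t = hfun dp dr s * hfun dp dr t * (t - s) := by
  have h1 : dp * s + dr ≠ 0 := by positivity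
  have h2 : dp * t + dr ≠ 0 := by positivity
  unfold hfun
  field_simp
  ring

lemma abs_hfun_sub_mul_le {dp dr s t : ℝ} (hdp : 0 < dp) (hdr : 0 < dr) (hs : 0 ≤ s)
    (ht : 0 ≤ t) : |hfun dp dr s - hfun dp dr t| * (s * t) ≤ |s - t| := by
  have a0 := hfun_pos hdp hdr hs
  have b0 := hfun_pos hdp hdr ht
  have h1 : (hfun dp dr s * s) * (hfun dp dr t * t) ≤ 1 :=
    mul_le_one₀ (hfun_mul_le_one hdp hdr hs) (by positivity) (hfun_mul_le_one hdp hdr ht)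
  rw [hfun_sub hdp hdr hs ht, abs_mul, abs_of_pos (mul_pos a0 b0), abs_sub_comm t s]
  calc _ = (hfun dp dr s * s) * (hfun dp dr t * t) * |s - t| := by ring
    _ ≤ 1 * |s - t| := by gcongr
    _ = _ := one_mul _

/-- `g` is 1-Lipschitz on `[0, ∞)`: with `a = h(s) s` and `b = h(t) t` in `[0, 1]`, one has
`g(s) - g(t) = (s - t) (a + b - a b)`, and `0 ≤ a + b - a b ≤ 1`. -/
lemma abs_gfun_sub_le {dp dr s t : ℝ} (hdp : 0 < dp) (hdr : 0 < dr) (hs : 0 ≤ s)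
    (ht : 0 ≤ t) : |gfun dp dr s - gfun dp dr t| ≤ |s - t| := by
  have a0 := mul_nonneg (hfun_pos hdp hdr hs).le hs
  have b0 := mul_nonneg (hfun_pos hdp hdr ht).le ht
  have a1 := hfun_mul_le_one hdp hdr hs
  have b1 := hfun_mul_le_one hdp hdr ht
  have key : gfun dp dr s - gfun dp dr t = (s - t) *
      (hfun dp dr s * s + hfun dp dr t * t - hfun dp dr s * s * (hfun dp dr t * t)) := by
    have h1 : dp * s + dr ≠ 0 := by positivity
    have h2 : dp * t + dr ≠ 0 := by positivity
    unfold gfun hfun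
    field_simp
    ring
  rw [key, abs_mul]
  refine mul_le_of_le_one_right (abs_nonneg _) (abs_le.2 ⟨?_, ?_⟩) <;> nlinarith

lemma Dmat_apply {d : ℕ} (d0 α1 α2 dp dr φ : ℝ) (u x : EuclideanSpace ℝ (Fin d)) :
    Dmat d0 α1 α2 dp dr φ u x = φ • (d0 • x + ((α1 * gfun dp dr ‖u‖) • x +
      ((α2 - α1) * hfun dp dr ‖u‖ * ⟪u, x⟫) • u)) := by
  rcases eq_or_ne u 0 with rfl | hu
  · simp [Dmat, outerProd, gfun]
  · have hn : ‖u‖ ≠ 0 := norm_ne_zero_iff.2 hu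
    have e : gfun dp dr ‖u‖ * ((α2 - α1) / ‖u‖ ^ 2) = (α2 - α1) * hfun dp dr ‖u‖ := by
      rw [gfun_eq]; field_simp
    simp only [Dmat, outerProd, smul_apply, add_apply,
      ContinuousLinearMap.id_apply, ContinuousLinearMap.smulRight_apply, innerSL_apply_apply,
      smul_add, smul_smul, ← e]
    simp only [mul_comm, mul_left_comm]

/-- Coercivity of `D(u)`, in the form giving `‖D(u)⁻¹‖ ≤ (φ d₀)⁻¹`. -/
lemma Dmat_lower_bound {d : ℕ} {d0 α1 α2 dp dr φ : ℝ} (hα1 : 0 < α1)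
    (hα2 : 0 < α2) (hdp : 0 < dp) (hdr : 0 < dr) (hφ : 0 < φ)
    (u x : EuclideanSpace ℝ (Fin d)) :
    φ * d0 * ‖x‖ ≤ ‖Dmat d0 α1 α2 dp dr φ u x‖ := by
  rcases eq_or_ne x 0 with rfl | hx
  · simp
  have hn : 0 < ‖x‖ := norm_pos_iff.2 hx
  have hh := hfun_pos hdp hdr (norm_nonneg u)
  have cs : ⟪u, x⟫ ^ 2 ≤ ‖u‖ ^ 2 * ‖x‖ ^ 2 := by
    rw [← mul_pow, ← sq_abs]
    gcongr
    exact abs_real_inner_le_norm u x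
  have e : ⟪Dmat d0 α1 α2 dp dr φ u x, x⟫ = φ * (d0 * ‖x‖ ^ 2 + hfun dp dr ‖u‖ *
      (α1 * (‖u‖ ^ 2 * ‖x‖ ^ 2 - ⟪u, x⟫ ^ 2) + α2 * ⟪u, x⟫ ^ 2)) := by
    rw [Dmat_apply, gfun_eq]
    simp only [inner_smul_left, inner_add_left, real_inner_self_eq_norm_sq, conj_trivial]
    ring
  have p : 0 ≤ hfun dp dr ‖u‖ *
      (α1 * (‖u‖ ^ 2 * ‖x‖ ^ 2 - ⟪u, x⟫ ^ 2) + α2 * ⟪u, x⟫ ^ 2) := by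
    have := sub_nonneg.2 cs
    positivity
  have lo : φ * (d0 * ‖x‖ ^ 2) ≤ ⟪Dmat d0 α1 α2 dp dr φ u x, x⟫ := by
    rw [e]
    gcongr
    linarith
  have up := real_inner_le_norm (Dmat d0 α1 α2 dp dr φ u x) x
  refine le_of_mul_le_mul_right ?_ hn
  linarith [lo.trans up, show φ * d0 * ‖x‖ * ‖x‖ = φ * (d0 * ‖x‖ ^ 2) by ring]

/-- `u ↦ h(|u|) u ⊗ u` is 3-Lipschitz. -/
lemma norm_rankOne_sub_le {d : ℕ} {dp dr : ℝ} (hdp : 0 < dp) (hdr : 0 < dr)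
    (u v x : EuclideanSpace ℝ (Fin d)) :
    ‖(hfun dp dr ‖u‖ * ⟪u, x⟫) • u - (hfun dp dr ‖v‖ * ⟪v, x⟫) • v‖ ≤
      3 * ‖u - v‖ * ‖x‖ := by
  have a0 := hfun_pos hdp hdr (norm_nonneg u)
  have b0 := hfun_pos hdp hdr (norm_nonneg v)
  have e : (hfun dp dr ‖u‖ * ⟪u, x⟫) • u - (hfun dp dr ‖v‖ * ⟪v, x⟫) • v =
      (hfun dp dr ‖u‖ * ⟪u - v, x⟫) • u + (hfun dp dr ‖v‖ * ⟪v, x⟫) • (u - v) +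
        ((hfun dp dr ‖u‖ - hfun dp dr ‖v‖) * ⟪v, x⟫) • u := by
    rw [inner_sub_left]
    module
  have t1 : ‖(hfun dp dr ‖u‖ * ⟪u - v, x⟫) • u‖ ≤ ‖u - v‖ * ‖x‖ := by
    rw [norm_smul, norm_mul, Real.norm_eq_abs, Real.norm_eq_abs, abs_of_pos a0]
    calc _ ≤ hfun dp dr ‖u‖ * (‖u - v‖ * ‖x‖) * ‖u‖ := by
          gcongr; exact abs_real_inner_le_norm _ _
      _ = hfun dp dr ‖u‖ * ‖u‖ * (‖u - v‖ * ‖x‖) := by ring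
      _ ≤ 1 * (‖u - v‖ * ‖x‖) := by gcongr; exact hfun_mul_le_one hdp hdr (norm_nonneg u)
      _ = _ := one_mul _
  have t2 : ‖(hfun dp dr ‖v‖ * ⟪v, x⟫) • (u - v)‖ ≤ ‖u - v‖ * ‖x‖ := by
    rw [norm_smul, norm_mul, Real.norm_eq_abs, Real.norm_eq_abs, abs_of_pos b0]
    calc _ ≤ hfun dp dr ‖v‖ * (‖v‖ * ‖x‖) * ‖u - v‖ := by
          gcongr; exact abs_real_inner_le_norm _ _
      _ = hfun dp dr ‖v‖ * ‖v‖ * (‖u - v‖ * ‖x‖) := by ring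
      _ ≤ 1 * (‖u - v‖ * ‖x‖) := by gcongr; exact hfun_mul_le_one hdp hdr (norm_nonneg v)
      _ = _ := one_mul _
  have t3 : ‖((hfun dp dr ‖u‖ - hfun dp dr ‖v‖) * ⟪v, x⟫) • u‖ ≤ ‖u - v‖ * ‖x‖ := by
    rw [norm_smul, norm_mul, Real.norm_eq_abs, Real.norm_eq_abs]
    calc _ ≤ |hfun dp dr ‖u‖ - hfun dp dr ‖v‖| * (‖v‖ * ‖x‖) * ‖u‖ := by
          gcongr; exact abs_real_inner_le_norm _ _
      _ = |hfun dp dr ‖u‖ - hfun dp dr ‖v‖| * (‖u‖ * ‖v‖) * ‖x‖ := by ring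
      _ ≤ |‖u‖ - ‖v‖| * ‖x‖ := by
          gcongr; exact abs_hfun_sub_mul_le hdp hdr (norm_nonneg u) (norm_nonneg v)
      _ ≤ _ := by gcongr; exact abs_norm_sub_norm_le u v
  rw [e]
  linarith [norm_add₃_le (a := (hfun dp dr ‖u‖ * ⟪u - v, x⟫) • u)
    (b := (hfun dp dr ‖v‖ * ⟪v, x⟫) • (u - v))
    (c := ((hfun dp dr ‖u‖ - hfun dp dr ‖v‖) * ⟪v, x⟫) • u)]

lemma norm_Dmat_sub_le {d : ℕ} {d0 α1 α2 dp dr φ : ℝ} (hα1 : 0 < α1)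
    (hdp : 0 < dp) (hdr : 0 < dr) (hφ : 0 < φ) (u v : EuclideanSpace ℝ (Fin d)) :
    ‖Dmat d0 α1 α2 dp dr φ u - Dmat d0 α1 α2 dp dr φ v‖ ≤
      φ * ((α1 + 3 * |α2 - α1|) * ‖u - v‖) := by
  refine ContinuousLinearMap.opNorm_le_bound _ (by positivity) fun x => ?_
  have e : (Dmat d0 α1 α2 dp dr φ u - Dmat d0 α1 α2 dp dr φ v) x =
      φ • ((α1 * (gfun dp dr ‖u‖ - gfun dp dr ‖v‖)) • x + (α2 - α1) •
        ((hfun dp dr ‖u‖ * ⟪u, x⟫) • u - (hfun dp dr ‖v‖ * ⟪v, x⟫) • v)) := by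
    rw [sub_apply, Dmat_apply, Dmat_apply]
    module
  rw [e, norm_smul, Real.norm_eq_abs, abs_of_pos hφ, mul_assoc]
  gcongr
  refine (norm_add_le _ _).trans ?_
  rw [norm_smul, norm_smul, norm_mul, Real.norm_eq_abs, Real.norm_eq_abs, Real.norm_eq_abs,
    abs_of_pos hα1]
  calc _ ≤ α1 * ‖u - v‖ * ‖x‖ + |α2 - α1| * (3 * ‖u - v‖ * ‖x‖) := by
        gcongr
        · exact (abs_gfun_sub_le hdp hdr (norm_nonneg u) (norm_nonneg v)).trans
            (abs_norm_sub_norm_le u v)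
        · exact norm_rankOne_sub_le hdp hdr u v x
    _ = _ := by ring

/-- Any right inverse of `D(u)` has norm at most `Φ₀ / d₀`. -/
lemma norm_rightInverse_le {d : ℕ} {d0 α1 α2 dp dr φ Φ0 : ℝ} (hd0 : 0 < d0) (hα1 : 0 < α1)
    (hα2 : 0 < α2) (hdp : 0 < dp) (hdr : 0 < dr) (hφ : 0 < φ) (hΦ0 : 0 < Φ0)
    (hφl : Φ0⁻¹ ≤ φ) (u : EuclideanSpace ℝ (Fin d))
    (E : EuclideanSpace ℝ (Fin d) →L[ℝ] EuclideanSpace ℝ (Fin d))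
    (hE : (Dmat d0 α1 α2 dp dr φ u).comp E =
      ContinuousLinearMap.id ℝ (EuclideanSpace ℝ (Fin d))) :
    ‖E‖ ≤ Φ0 / d0 := by
  refine ContinuousLinearMap.opNorm_le_bound _ (by positivity) fun y => ?_
  have h := Dmat_lower_bound (d0 := d0) hα1 hα2 hdp hdr hφ u (E y)
  rw [← ContinuousLinearMap.comp_apply, hE, ContinuousLinearMap.id_apply] at h
  have h2 : Φ0⁻¹ * d0 * ‖E y‖ ≤ ‖y‖ := le_trans (by gcongr) h
  calc ‖E y‖ = Φ0 / d0 * (Φ0⁻¹ * d0 * ‖E y‖) := by field_simp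
    _ ≤ Φ0 / d0 * ‖y‖ := by gcongr

theorem Dmat_inverse_lipschitz {d : ℕ} (hd : 1 ≤ d)
    (d0 α1 α2 dp dr φ : ℝ)
    (hd0 : 0 < d0) (hα1 : 0 < α1) (hα2 : 0 < α2) (hdp : 0 < dp) (hdr : 0 < dr)
    (hφ : 0 < φ) (Φ0 : ℝ) (hΦ0 : 0 < Φ0) (hφl : Φ0⁻¹ ≤ φ) (hφu : φ ≤ Φ0) :
    ∀ u v : EuclideanSpace ℝ (Fin d),
      ∀ Du' Dv' : EuclideanSpace ℝ (Fin d) →L[ℝ] EuclideanSpace ℝ (Fin d),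
        (Dmat d0 α1 α2 dp dr φ u).comp Du' =
            ContinuousLinearMap.id ℝ (EuclideanSpace ℝ (Fin d)) →
        Du'.comp (Dmat d0 α1 α2 dp dr φ u) =
            ContinuousLinearMap.id ℝ (EuclideanSpace ℝ (Fin d)) →
        (Dmat d0 α1 α2 dp dr φ v).comp Dv' =
            ContinuousLinearMap.id ℝ (EuclideanSpace ℝ (Fin d)) →
        Dv'.comp (Dmat d0 α1 α2 dp dr φ v) =
            ContinuousLinearMap.id ℝ (EuclideanSpace ℝ (Fin d)) →
        ‖Du' - Dv'‖ ≤ Φ0 ^ 3 * (d0 ^ 2)⁻¹ * (α1 + 3 * |α2 - α1|) * ‖u - v‖ := by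
  intro u v Du' Dv' hu1 hu2 hv1 hv2
  have nu := norm_rightInverse_le hd0 hα1 hα2 hdp hdr hφ hΦ0 hφl u Du' hu1
  have nv := norm_rightInverse_le hd0 hα1 hα2 hdp hdr hφ hΦ0 hφl v Dv' hv1
  have nd := norm_Dmat_sub_le (d0 := d0) (α2 := α2) hα1 hdp hdr hφ v u
  have e : Du' - Dv' =
      Du'.comp ((Dmat d0 α1 α2 dp dr φ v - Dmat d0 α1 α2 dp dr φ u).comp Dv') := by
    rw [ContinuousLinearMap.sub_comp, ContinuousLinearMap.comp_sub, hv1,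
      ← ContinuousLinearMap.comp_assoc, hu2, ContinuousLinearMap.comp_id,
      ContinuousLinearMap.id_comp]
  rw [norm_sub_rev v u] at nd
  rw [e]
  calc _ ≤ ‖Du'‖ * (‖Dmat d0 α1 α2 dp dr φ v - Dmat d0 α1 α2 dp dr φ u‖ * ‖Dv'‖) :=
        (ContinuousLinearMap.opNorm_comp_le _ _).trans
          (mul_le_mul_of_nonneg_left (ContinuousLinearMap.opNorm_comp_le _ _) (norm_nonneg _))
    _ ≤ Φ0 / d0 * (Φ0 * ((α1 + 3 * |α2 - α1|) * ‖u - v‖) * (Φ0 / d0)) := by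
        have nd' := nd.trans (mul_le_mul_of_nonneg_right hφu
          (by positivity : 0 ≤ (α1 + 3 * |α2 - α1|) * ‖u - v‖))
        gcongr
    _ = _ := by field_simp
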